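/- arXiv:2501.18843 — 6 statements merged into one kernel-verified Lean document; each statement's English description precedes it below -/
import Mathlib

section
/- Let T > 0 and d > 0 be reals, and let f : ℝ → Bool be the clock signal with period T and high time x, i.e. f(t) = true iff t − T·⌊t/T⌋ ∈ [0, x). If d < x and x ≤ T − d, then the signal g defined by g(t) = ¬(f(t) ∧ ¬f(t − d)) (the NAND of f with the inverted d-delayed copy of f) is periodic with period T and is false exactly on the interval [0, d) modulo T, i.e. g(t) = false iff t − T·⌊t/T⌋ ∈ [0, d). -/
theorem floor_div_eq_of_mul_le_of_lt_mul {T t : ℝ} {n : ℤ} (hT : 0 < T)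
    (hle : T * n ≤ t) (hlt : t < T * n + T) : ⌊t / T⌋ = n := by
  rw [Int.floor_eq_iff, le_div_iff₀ hT, div_lt_iff₀ hT]
  constructor <;> linarith

/-- first pulse-shaper stage. `f` is the clock of period `T` and
high time `x`; `g = NAND(f, inverted d-delayed f)` is periodic with period `T`
and low exactly on `[0, d)` modulo `T`. -/
theorem pulse_shaper_stage1
    (T d x : ℝ) (hT : 0 < T) (hd : 0 < d) (hx : 0 < x) (hxT : x < T)
    (hdx : d < x) (hxTd : x ≤ T - d)
    (f : ℝ → Bool)
    (hf : ∀ t : ℝ, f t = true ↔ t - T * (⌊t / T⌋ : ℝ) ∈ Set.Ico (0 : ℝ) x)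
    (g : ℝ → Bool)
    (hg : ∀ t : ℝ, g t = !(f t && !(f (t - d)))) :
    (∀ t : ℝ, g (t + T) = g t) ∧
    (∀ t : ℝ, g t = false ↔ t - T * (⌊t / T⌋ : ℝ) ∈ Set.Ico (0 : ℝ) d) := by
  have hlow : ∀ t : ℝ, g t = false ↔ t - T * (⌊t / T⌋ : ℝ) ∈ Set.Ico (0 : ℝ) d := by
    intro t
    have hle : T * (⌊t / T⌋ : ℝ) ≤ t := by
      have h := (le_div_iff₀ hT).1 (Int.floor_le (t / T))
      linarith
    have hlt : t < T * (⌊t / T⌋ : ℝ) + T := by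
      have h := (div_lt_iff₀ hT).1 (Int.lt_floor_add_one (t / T))
      linarith
    have hgt : g t = false ↔ f t = true ∧ ¬ f (t - d) = true := by
      rw [hg]
      cases f t <;> cases f (t - d) <;> simp
    rw [hgt, hf, hf]
    by_cases hr : t - T * (⌊t / T⌋ : ℝ) < d
    · have hfloor : ⌊(t - d) / T⌋ = ⌊t / T⌋ - 1 := by
        apply floor_div_eq_of_mul_le_of_lt_mul hT <;> push_cast <;> linarith
      rw [hfloor]
      push_cast
      refine ⟨fun _ => ⟨by linarith, hr⟩, fun _ => ⟨⟨by linarith, by linarith⟩, ?_⟩⟩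
      rintro ⟨-, h⟩
      linarith
    · have hfloor : ⌊(t - d) / T⌋ = ⌊t / T⌋ := by
        apply floor_div_eq_of_mul_le_of_lt_mul hT <;> linarith
      rw [hfloor]
      refine ⟨fun ⟨h, hn⟩ => (hn ⟨by linarith, by linarith [h.2]⟩).elim, fun h => (hr h.2).elim⟩
  refine ⟨fun t => ?_, hlow⟩
  have hfloor : ⌊(t + T) / T⌋ = ⌊t / T⌋ + 1 := by
    rw [add_div, div_self hT.ne', Int.floor_add_one]
  have hshift : t + T - T * (⌊(t + T) / T⌋ : ℝ) = t - T * (⌊t / T⌋ : ℝ) := by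
    rw [hfloor]
    push_cast
    ring
  have h : g (t + T) = false ↔ g t = false := by rw [hlow, hlow, hshift]
  rwa [Bool.eq_iff_iff, ← not_iff_not, Bool.not_eq_true, Bool.not_eq_true]
end

section
/- Let T > 0, ℓ > 0 and d be reals with 0 < d ≤ ℓ and ℓ + d ≤ T, and let g : ℝ → Bool be a signal that is periodic with period T and is false exactly on the interval [0, ℓ) modulo T, i.e. g(t) = false iff t − T·⌊t/T⌋ ∈ [0, ℓ). Then the signal h defined by h(t) = ¬(g(t) ∧ g(t − d)) (the NAND of g with its d-delayed copy) is periodic with period T and is true exactly on the interval [0, ℓ + d) modulo T; in particular, h has high time ℓ + d per period. -/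
/-- Subtracting at most the residue of `t` modulo `T` does not change the period containing `t`. -/
theorem floor_sub_div_eq_of_le_residue {T t d : ℝ} (hT : 0 < T) (hd : 0 ≤ d)
    (hdt : d ≤ t - T * (⌊t / T⌋ : ℝ)) : ⌊(t - d) / T⌋ = ⌊t / T⌋ := by
  have hlt := (div_lt_iff₀ hT).1 (Int.lt_floor_add_one (t / T))
  rw [Int.floor_eq_iff, le_div_iff₀ hT, div_lt_iff₀ hT]
  constructor <;> linarith

/-- second pulse-shaper stage. `g` is periodic with period `T`
and low exactly on `[0, ℓ)` modulo `T`; then `h = NAND(g, d-delayed g)` is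
periodic with period `T` and high exactly on `[0, ℓ + d)` modulo `T`. -/
theorem pulse_shaper_stage2
    (T ℓ d : ℝ) (hT : 0 < T) (hℓ : 0 < ℓ) (hd : 0 < d) (hdℓ : d ≤ ℓ)
    (hℓdT : ℓ + d ≤ T)
    (g : ℝ → Bool)
    (hgper : ∀ t : ℝ, g (t + T) = g t)
    (hg : ∀ t : ℝ, g t = false ↔ t - T * (⌊t / T⌋ : ℝ) ∈ Set.Ico (0 : ℝ) ℓ)
    (h : ℝ → Bool)
    (hh : ∀ t : ℝ, h t = !(g t && g (t - d))) :
    (∀ t : ℝ, h (t + T) = h t) ∧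
    (∀ t : ℝ, h t = true ↔ t - T * (⌊t / T⌋ : ℝ) ∈ Set.Ico (0 : ℝ) (ℓ + d)) := by
  refine ⟨fun t => ?_, fun t => ?_⟩
  · rw [hh, hh, hgper, add_sub_right_comm, hgper]
  · have hnonneg : 0 ≤ t - T * (⌊t / T⌋ : ℝ) := by
      have := (le_div_iff₀ hT).1 (Int.floor_le (t / T))
      linarith
    have hhigh : h t = true ↔ g t = false ∨ g (t - d) = false := by
      rw [hh]
      cases g t <;> simp
    rw [hhigh, hg, hg, Set.mem_Ico, Set.mem_Ico, Set.mem_Ico]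
    rcases lt_or_ge (t - T * (⌊t / T⌋ : ℝ)) ℓ with hlow | hlow
    · exact iff_of_true (Or.inl ⟨hnonneg, hlow⟩) ⟨hnonneg, by linarith⟩
    · rw [floor_sub_div_eq_of_le_residue hT hd.le (hdℓ.trans hlow)]
      constructor
      · rintro (⟨_, hlt⟩ | ⟨_, hlt⟩) <;> constructor <;> linarith
      · rintro ⟨_, hlt⟩
        right
        constructor <;> linarith
end

section
/- Let T > 0 and x be reals with T/3 < x < 2T/3, and let f : ℝ → Bool be the clock signal with period T and high time x, i.e. f(t) = true iff t − T·⌊t/T⌋ ∈ [0, x). Define g(t) = ¬(f(t) ∧ ¬f(t − T/3)) and out(t) = ¬(g(t) ∧ g(t − T/6)). Then out is periodic with period T and is true exactly on [0, T/2) modulo T, i.e. out(t) = true iff t − T·⌊t/T⌋ ∈ [0, T/2). In particular the output clock has high time T/2 and low time T/2, and each output pulse begins at the same time as the corresponding input pulse. -/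
/-- Delaying by `d ∈ [0, T]` shifts the residue modulo `T` by `d`, wrapping around at zero. -/
theorem sub_mul_floor_div_delay {T d : ℝ} (hT : 0 < T) (hd0 : 0 ≤ d) (hdT : d ≤ T) (t : ℝ) :
    t - d - T * (⌊(t - d) / T⌋ : ℝ) =
      if d ≤ t - T * (⌊t / T⌋ : ℝ) then t - T * (⌊t / T⌋ : ℝ) - d
      else t - T * (⌊t / T⌋ : ℝ) - d + T := by
  have hlo : (⌊t / T⌋ : ℝ) * T ≤ t := (le_div_iff₀ hT).1 (Int.floor_le _)
  have hhi : t < ((⌊t / T⌋ : ℝ) + 1) * T := (div_lt_iff₀ hT).1 (Int.lt_floor_add_one _)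
  split_ifs with h
  · have hfloor : ⌊(t - d) / T⌋ = ⌊t / T⌋ := by
      rw [Int.floor_eq_iff, le_div_iff₀ hT, div_lt_iff₀ hT]
      constructor <;> linarith
    rw [hfloor]
    ring
  · have hfloor : ⌊(t - d) / T⌋ = ⌊t / T⌋ - 1 := by
      rw [Int.floor_eq_iff, le_div_iff₀ hT, div_lt_iff₀ hT]
      push_cast
      constructor <;> linarith
    rw [hfloor]
    push_cast
    ring

/-- The residue of `t` modulo `T` lies in `[0, T)`. -/
theorem sub_mul_floor_div_mem_Ico {T : ℝ} (hT : 0 < T) (t : ℝ) :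
    t - T * (⌊t / T⌋ : ℝ) ∈ Set.Ico (0 : ℝ) T := by
  have hlo : (⌊t / T⌋ : ℝ) * T ≤ t := (le_div_iff₀ hT).1 (Int.floor_le _)
  have hhi : t < ((⌊t / T⌋ : ℝ) + 1) * T := (div_lt_iff₀ hT).1 (Int.lt_floor_add_one _)
  constructor <;> linarith

/-- The residue modulo `T` is `T`-periodic. -/
theorem add_sub_mul_floor_div {T : ℝ} (hT : 0 < T) (t : ℝ) :
    t + T - T * (⌊(t + T) / T⌋ : ℝ) = t - T * (⌊t / T⌋ : ℝ) := by
  rw [add_div, div_self hT.ne', Int.floor_add_one]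
  push_cast
  ring

/-- correct behavior of the two-stage pulse shaper with ideal
delays, for input high time `T/3 < x < 2T/3`: the output is periodic with
period `T` and high exactly on `[0, T/2)` modulo `T`. -/
theorem pulse_shaper_correct
    (T x : ℝ) (hT : 0 < T) (hx1 : T / 3 < x) (hx2 : x < 2 * T / 3)
    (f : ℝ → Bool)
    (hf : ∀ t : ℝ, f t = true ↔ t - T * (⌊t / T⌋ : ℝ) ∈ Set.Ico (0 : ℝ) x)
    (g out : ℝ → Bool)
    (hg : ∀ t : ℝ, g t = !(f t && !(f (t - T / 3))))
    (hout : ∀ t : ℝ, out t = !(g t && g (t - T / 6))) :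
    (∀ t : ℝ, out (t + T) = out t) ∧
    (∀ t : ℝ, out t = true ↔ t - T * (⌊t / T⌋ : ℝ) ∈ Set.Ico (0 : ℝ) (T / 2)) := by
  have hg_low : ∀ t : ℝ, g t = false ↔ t - T * (⌊t / T⌋ : ℝ) < T / 3 := by
    intro t
    obtain ⟨h0, h1⟩ := sub_mul_floor_div_mem_Ico hT t
    have hdelay := sub_mul_floor_div_delay hT (d := T / 3) (by linarith) (by linarith) t
    have hlow : g t = false ↔ f t = true ∧ ¬ f (t - T / 3) = true := by
      simp [hg]
    rw [hlow, hf, hf, hdelay, Set.mem_Ico, Set.mem_Ico]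
    split_ifs with h
    · constructor
      · rintro ⟨⟨-, hx⟩, hn⟩
        exact absurd ⟨by linarith, by linarith⟩ hn
      · intro hlt
        linarith
    · constructor
      · intro _
        linarith
      · intro hlt
        exact ⟨⟨h0, by linarith⟩, fun hn => by linarith [hn.2]⟩
  have hout_high : ∀ t : ℝ,
      out t = true ↔ t - T * (⌊t / T⌋ : ℝ) ∈ Set.Ico (0 : ℝ) (T / 2) := by
    intro t
    obtain ⟨h0, h1⟩ := sub_mul_floor_div_mem_Ico hT t
    have hdelay := sub_mul_floor_div_delay hT (d := T / 6) (by linarith) (by linarith) t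
    have hhigh : out t = true ↔ g t = false ∨ g (t - T / 6) = false := by
      rw [hout]
      cases g t <;> simp
    rw [hhigh, hg_low, hg_low, hdelay, Set.mem_Ico]
    split_ifs with h
    · constructor
      · rintro (hlt | hlt) <;> exact ⟨h0, by linarith⟩
      · rintro ⟨-, hlt⟩
        exact Or.inr (by linarith)
    · constructor
      · intro _
        exact ⟨h0, by linarith⟩
      · intro _
        exact Or.inl (by linarith)
  refine ⟨fun t => ?_, hout_high⟩
  rw [Bool.eq_iff_iff, hout_high, hout_high, add_sub_mul_floor_div hT]
end

section
/- Let T > 0 and x be reals with 2T/3 < x ≤ 5T/6, and let f : ℝ → Bool be the clock signal with period T and high time x, i.e. f(t) = true iff t − T·⌊t/T⌋ ∈ [0, x). Define g(t) = ¬(f(t) ∧ ¬f(t − T/3)) and out(t) = ¬(g(t) ∧ g(t − T/6)). Then out is periodic with period T and is true exactly on [x − 2T/3, T/2) modulo T. In particular, the output pulse starts x − 2T/3 > 0 time units after the input pulse and has high time 7T/6 − x < T/2 instead of the intended high time T/2. -/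
/-- The phase of `t - d` modulo `T`, for a delay `d` of less than one period, in terms of the
phase of `t`. -/
lemma phase_sub_mem_Ico_iff {T : ℝ} (hT : 0 < T) (x t : ℝ) {d : ℝ} (hd : 0 ≤ d) (hdT : d < T) :
    (t - d) - T * (⌊(t - d) / T⌋ : ℝ) ∈ Set.Ico (0 : ℝ) x ↔
      (d ≤ t - T * (⌊t / T⌋ : ℝ) ∧ t - T * (⌊t / T⌋ : ℝ) - d < x) ∨
      (t - T * (⌊t / T⌋ : ℝ) < d ∧ t - T * (⌊t / T⌋ : ℝ) - d + T < x) := by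
  have h0 := Int.floor_le (t / T)
  have h1 := Int.lt_floor_add_one (t / T)
  rw [le_div_iff₀ hT] at h0
  rw [div_lt_iff₀ hT] at h1
  rcases le_or_gt d (t - T * (⌊t / T⌋ : ℝ)) with h | h
  · have hfl : ⌊(t - d) / T⌋ = ⌊t / T⌋ := by
      rw [Int.floor_eq_iff, le_div_iff₀ hT, div_lt_iff₀ hT]
      constructor <;> linarith
    rw [hfl, Set.mem_Ico]
    constructor
    · rintro ⟨_, h3⟩
      exact Or.inl ⟨h, by linarith⟩
    · rintro (⟨_, h3⟩ | ⟨h2, _⟩) <;> constructor <;> linarith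
  · have hfl : ⌊(t - d) / T⌋ = ⌊t / T⌋ - 1 := by
      rw [Int.floor_eq_iff, le_div_iff₀ hT, div_lt_iff₀ hT]
      push_cast
      constructor <;> linarith
    rw [hfl, Set.mem_Ico]
    push_cast
    constructor
    · rintro ⟨_, h3⟩
      exact Or.inr ⟨h, by linarith⟩
    · rintro (⟨h2, _⟩ | ⟨_, h3⟩) <;> constructor <;> linarith

/-- flawed behavior of the two-stage pulse shaper when the input
high time satisfies `2T/3 < x ≤ 5T/6`: the output is periodic with period `T`
and high exactly on `[x - 2T/3, T/2)` modulo `T`; in particular the output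
pulse starts `x - 2T/3 > 0` after the input pulse and has high time
`7T/6 - x < T/2`. -/
theorem pulse_shaper_flaw_shifted_pulse
    (T x : ℝ) (hT : 0 < T) (hx1 : 2 * T / 3 < x) (hx2 : x ≤ 5 * T / 6)
    (f : ℝ → Bool)
    (hf : ∀ t : ℝ, f t = true ↔ t - T * (⌊t / T⌋ : ℝ) ∈ Set.Ico (0 : ℝ) x)
    (g out : ℝ → Bool)
    (hg : ∀ t : ℝ, g t = !(f t && !(f (t - T / 3))))
    (hout : ∀ t : ℝ, out t = !(g t && g (t - T / 6))) :
    (∀ t : ℝ, out (t + T) = out t) ∧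
    (∀ t : ℝ, out t = true ↔
      t - T * (⌊t / T⌋ : ℝ) ∈ Set.Ico (x - 2 * T / 3) (T / 2)) ∧
    0 < x - 2 * T / 3 ∧ 7 * T / 6 - x < T / 2 := by
  have key : ∀ t : ℝ, out t = true ↔
      t - T * (⌊t / T⌋ : ℝ) ∈ Set.Ico (x - 2 * T / 3) (T / 2) := by
    intro t
    have hdelay : ∀ d, 0 ≤ d → d < T → (f (t - d) = true ↔ _) := fun d hd hdT =>
      (hf (t - d)).trans (phase_sub_mem_Ico_iff hT x t hd hdT)
    have f0 := hf t
    have f2 := hdelay (T / 6) (by linarith) (by linarith)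
    have f3 := hdelay (T / 3) (by linarith) (by linarith)
    have f5 := hdelay (T / 6 + T / 3) (by linarith) (by linarith)
    have h0 := Int.floor_le (t / T)
    have h1 := Int.lt_floor_add_one (t / T)
    rw [le_div_iff₀ hT] at h0
    rw [div_lt_iff₀ hT] at h1
    have hout_iff : out t = true ↔ (f t = true ∧ ¬ f (t - T / 3) = true) ∨
        (f (t - T / 6) = true ∧ ¬ f (t - (T / 6 + T / 3)) = true) := by
      rw [hout, hg, hg, sub_sub]
      simp
    rw [hout_iff, f0, f2, f3, f5, Set.mem_Ico, Set.mem_Ico]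
    have hr0 : 0 ≤ t - T * (⌊t / T⌋ : ℝ) := by linarith
    have hrT : t - T * (⌊t / T⌋ : ℝ) < T := by linarith
    generalize t - T * (⌊t / T⌋ : ℝ) = r at hr0 hrT ⊢
    clear * - hT hx1 hx2 hr0 hrT
    grind
  refine ⟨fun t => ?_, key, by linarith, by linarith⟩
  have hfl : ⌊(t + T) / T⌋ = ⌊t / T⌋ + 1 := by
    rw [add_div, div_self hT.ne', Int.floor_add_one]
  rw [Bool.eq_iff_iff, key, key, hfl]
  push_cast
  ring_nf
end

section
/- Let T > 0 be real, and let f : ℝ → Bool be the clock signal with period T and high time 3T/4, i.e. f(t) = true iff t − T·⌊t/T⌋ ∈ [0, 3T/4). Define g(t) = ¬(f(t) ∧ ¬f(t − T/3)) and out(t) = ¬(g(t) ∧ g(t − T/6)). Then g is false exactly on [T/12, T/3) modulo T (a low interval of length T/4), and out is true exactly on [T/12, T/2) modulo T; in particular the output clock has high time 5T/12 rather than T/2, and its rising edge is delayed by T/12 relative to the input pulse. -/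
/-- The phase of `t` modulo `T` lies in `[0, T)`. -/
theorem phase_mem_Ico {T : ℝ} (hT : 0 < T) (t : ℝ) :
    t - T * (⌊t / T⌋ : ℝ) ∈ Set.Ico 0 T := by
  have h : t - T * (⌊t / T⌋ : ℝ) = T * Int.fract (t / T) := by
    rw [Int.fract, mul_sub, mul_div_cancel₀ t hT.ne']
  rw [h]
  exact ⟨mul_nonneg hT.le (Int.fract_nonneg _),
    mul_lt_of_lt_one_right hT (Int.fract_lt_one _)⟩

/-- The phase modulo `T` is the only representative of `t` in `[0, T)`. -/
theorem phase_eq_of_mem_Ico {T : ℝ} (hT : 0 < T) {t : ℝ} {n : ℤ}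
    (h : t - T * (n : ℝ) ∈ Set.Ico 0 T) :
    t - T * (⌊t / T⌋ : ℝ) = t - T * (n : ℝ) := by
  have hn : ⌊t / T⌋ = n := by
    rw [Int.floor_eq_iff, le_div_iff₀ hT, div_lt_iff₀ hT]
    constructor <;> linarith [h.1, h.2]
  rw [hn]

/-- Delaying by `d ∈ [0, T]` subtracts `d` from the phase, wrapping around below `0`. -/
theorem phase_sub {T : ℝ} (hT : 0 < T) {d : ℝ} (hd : d ∈ Set.Icc 0 T) (t : ℝ) :
    (t - d) - T * (⌊(t - d) / T⌋ : ℝ) =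
      if d ≤ t - T * (⌊t / T⌋ : ℝ) then t - T * (⌊t / T⌋ : ℝ) - d
      else t - T * (⌊t / T⌋ : ℝ) - d + T := by
  obtain ⟨h0, h1⟩ := phase_mem_Ico hT t
  obtain ⟨hd0, hd1⟩ := hd
  split_ifs with h
  · rw [phase_eq_of_mem_Ico hT (n := ⌊t / T⌋) ⟨by linarith, by linarith⟩]
    ring
  · rw [not_le] at h
    rw [phase_eq_of_mem_Ico hT (n := ⌊t / T⌋ - 1)
      ⟨by push_cast; linarith, by push_cast; linarith⟩]
    push_cast
    ring

/-- behavior of the old pulse shaper on the nominal input of the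
delay element, a clock of high time `3T/4`: the intermediate signal `g` is low
exactly on `[T/12, T/3)` modulo `T`, and the output is high exactly on
`[T/12, T/2)` modulo `T`, i.e. it has high time `5T/12` and its rising edge is
delayed by `T/12`. -/
theorem pulse_shaper_flaw_nominal
    (T : ℝ) (hT : 0 < T)
    (f : ℝ → Bool)
    (hf : ∀ t : ℝ, f t = true ↔
      t - T * (⌊t / T⌋ : ℝ) ∈ Set.Ico (0 : ℝ) (3 * T / 4))
    (g out : ℝ → Bool)
    (hg : ∀ t : ℝ, g t = !(f t && !(f (t - T / 3))))
    (hout : ∀ t : ℝ, out t = !(g t && g (t - T / 6))) :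
    (∀ t : ℝ, g t = false ↔
      t - T * (⌊t / T⌋ : ℝ) ∈ Set.Ico (T / 12) (T / 3)) ∧
    (∀ t : ℝ, out t = true ↔
      t - T * (⌊t / T⌋ : ℝ) ∈ Set.Ico (T / 12) (T / 2)) := by
  have hlow : ∀ t : ℝ, g t = false ↔
      t - T * (⌊t / T⌋ : ℝ) ∈ Set.Ico (T / 12) (T / 3) := by
    intro t
    have hft := hf t
    have hfd := hf (t - T / 3)
    rw [phase_sub hT ⟨by linarith, by linarith⟩ t] at hfd
    have hphase := phase_mem_Ico hT t
    have hgt : g t = false ↔ f t = true ∧ ¬ f (t - T / 3) = true := by simp [hg]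
    rw [hgt, hft, hfd]
    generalize t - T * (⌊t / T⌋ : ℝ) = p at *
    simp only [Set.mem_Ico] at *
    grind
  refine ⟨hlow, fun t => ?_⟩
  have hgd := hlow (t - T / 6)
  rw [phase_sub hT ⟨by linarith, by linarith⟩ t] at hgd
  have hphase := phase_mem_Ico hT t
  have hot : out t = true ↔ g t = false ∨ g (t - T / 6) = false := by
    simp [hout]
  rw [hot, hlow, hgd]
  generalize t - T * (⌊t / T⌋ : ℝ) = p at *
  simp only [Set.mem_Ico] at *
  grind
end

section
/- Let T > 0 and x be reals with 5T/6 < x < T, and let f : ℝ → Bool be the clock signal with period T and high time x, i.e. f(t) = true iff t − T·⌊t/T⌋ ∈ [0, x). Define g(t) = ¬(f(t) ∧ ¬f(t − T/3)) and out(t) = ¬(g(t) ∧ g(t − T/6)). Then out is periodic with period T and is true exactly on the union [x − 2T/3, T/3) ∪ [x − T/2, T/2) modulo T, where these two intervals are disjoint (since x − T/2 > T/3) and each has length T − x < T/6. In particular, the output is a glitchy clock with two high pulses per period, each shorter than T/6. -/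
/-- The phase of `s + T * n` modulo `T` is `s` when `s` lies in the fundamental period. -/
theorem sub_mul_floor_add_mul_int {T s : ℝ} (hT : 0 < T) (h0 : 0 ≤ s) (h1 : s < T) (n : ℤ) :
    (s + T * n) - T * (⌊(s + T * n) / T⌋ : ℝ) = s := by
  have hfloor : ⌊(s + T * n) / T⌋ = n := by
    rw [Int.floor_eq_iff, le_div_iff₀ hT, div_lt_iff₀ hT]
    constructor <;> linarith
  rw [hfloor]
  ring

/-- Every real is a phase in `[0, T)` plus an integer multiple of `T`. -/
theorem exists_eq_add_mul_int {T : ℝ} (hT : 0 < T) (t : ℝ) :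
    ∃ s : ℝ, ∃ n : ℤ, 0 ≤ s ∧ s < T ∧ t = s + T * n := by
  have h0 := (le_div_iff₀ hT).1 (Int.floor_le (t / T))
  have h1 := (div_lt_iff₀ hT).1 (Int.lt_floor_add_one (t / T))
  exact ⟨t - T * (⌊t / T⌋ : ℝ), ⌊t / T⌋, by linarith, by linarith, by ring⟩

/-- glitchy behavior of the two-stage pulse shaper when the input
high time satisfies `5T/6 < x < T`: the output is periodic with period `T` and
high exactly on `[x - 2T/3, T/3) ∪ [x - T/2, T/2)` modulo `T`, where the two
intervals are disjoint (`x - T/2 > T/3`) and each has length `T - x < T/6`. -/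
theorem pulse_shaper_flaw_glitch
    (T x : ℝ) (hT : 0 < T) (hx1 : 5 * T / 6 < x) (hx2 : x < T)
    (f : ℝ → Bool)
    (hf : ∀ t : ℝ, f t = true ↔ t - T * (⌊t / T⌋ : ℝ) ∈ Set.Ico (0 : ℝ) x)
    (g out : ℝ → Bool)
    (hg : ∀ t : ℝ, g t = !(f t && !(f (t - T / 3))))
    (hout : ∀ t : ℝ, out t = !(g t && g (t - T / 6))) :
    (∀ t : ℝ, out (t + T) = out t) ∧
    (∀ t : ℝ, out t = true ↔
      t - T * (⌊t / T⌋ : ℝ) ∈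
        Set.Ico (x - 2 * T / 3) (T / 3) ∪ Set.Ico (x - T / 2) (T / 2)) ∧
    T / 3 < x - T / 2 ∧
    Disjoint (Set.Ico (x - 2 * T / 3) (T / 3)) (Set.Ico (x - T / 2) (T / 2)) ∧
    T / 3 - (x - 2 * T / 3) = T - x ∧ T / 2 - (x - T / 2) = T - x ∧
    T - x < T / 6 := by
  have hfs : ∀ s : ℝ, 0 ≤ s → s < T → ∀ n : ℤ, (f (s + T * n) = true ↔ s < x) := by
    intro s h0 h1 n
    rw [hf, sub_mul_floor_add_mul_int hT h0 h1, Set.mem_Ico]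
    exact and_iff_right h0
  have hgs : ∀ s : ℝ, 0 ≤ s → s < T → ∀ n : ℤ,
      (g (s + T * n) = false ↔ s ∈ Set.Ico (x - 2 * T / 3) (T / 3)) := by
    intro s h0 h1 n
    have hgf : g (s + T * n) = false ↔
        f (s + T * n) = true ∧ ¬ f (s + T * n - T / 3) = true := by
      rw [hg]; simp
    rw [hgf, hfs s h0 h1, Set.mem_Ico]
    rcases lt_or_ge s (T / 3) with h | h
    · have e : s + T * n - T / 3 = (s + 2 * T / 3) + T * ((n - 1 : ℤ) : ℝ) := by
        push_cast; ring
      rw [e, hfs _ (by linarith) (by linarith), not_lt]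
      constructor <;> rintro ⟨_, _⟩ <;> constructor <;> linarith
    · have e : s + T * n - T / 3 = (s - T / 3) + T * n := by ring
      rw [e, hfs _ (by linarith) (by linarith), not_lt]
      constructor <;> rintro ⟨_, _⟩ <;> constructor <;> linarith
  have houts : ∀ s : ℝ, 0 ≤ s → s < T → ∀ n : ℤ, (out (s + T * n) = true ↔
      s ∈ Set.Ico (x - 2 * T / 3) (T / 3) ∪ Set.Ico (x - T / 2) (T / 2)) := by
    intro s h0 h1 n
    have hog : out (s + T * n) = true ↔
        g (s + T * n) = false ∨ g (s + T * n - T / 6) = false := by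
      rw [hout, Bool.not_eq_true', Bool.and_eq_false_iff]
    rw [hog, hgs s h0 h1, Set.mem_union]
    refine or_congr_right ?_
    rcases lt_or_ge s (T / 6) with h | h
    · have e : s + T * n - T / 6 = (s + 5 * T / 6) + T * ((n - 1 : ℤ) : ℝ) := by
        push_cast; ring
      rw [e, hgs _ (by linarith) (by linarith), Set.mem_Ico, Set.mem_Ico]
      constructor <;> rintro ⟨_, _⟩ <;> constructor <;> linarith
    · have e : s + T * n - T / 6 = (s - T / 6) + T * n := by ring
      rw [e, hgs _ (by linarith) (by linarith), Set.mem_Ico, Set.mem_Ico]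
      constructor <;> rintro ⟨_, _⟩ <;> constructor <;> linarith
  refine ⟨fun t => ?_, fun t => ?_, by linarith, ?_, by ring, by ring, by linarith⟩
  · obtain ⟨s, n, h0, h1, rfl⟩ := exists_eq_add_mul_int hT t
    have e : s + T * n + T = s + T * ((n + 1 : ℤ) : ℝ) := by push_cast; ring
    rw [Bool.eq_iff_iff, e, houts s h0 h1, houts s h0 h1]
  · obtain ⟨s, n, h0, h1, rfl⟩ := exists_eq_add_mul_int hT t
    rw [houts s h0 h1, sub_mul_floor_add_mul_int hT h0 h1]
  · rw [Set.disjoint_left]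
    rintro t ⟨_, h⟩ ⟨h', _⟩
    linarith
end
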